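/- arXiv:1308.0758 — 2 statements merged into one kernel-verified Lean document; each statement's English description precedes it below -/
import Mathlib

section
/- If R is a right small dual ring, then the Jacobson radical J of R is contained in the left singular ideal Z_l of R. -/
open Pointwise

/-- The left annihilator `l(X) = {r : ∀ x ∈ X, r * x = 0}` of a subset of a ring. -/
def lAnn (R : Type*) [Ring R] (X : Set R) : Set R := {r : R | ∀ x ∈ X, r * x = 0}

/-- The right annihilator `r(X) = {r : ∀ x ∈ X, x * r = 0}` of a subset of a ring. -/
def rAnn (R : Type*) [Ring R] (X : Set R) : Set R := {r : R | ∀ x ∈ X, x * r = 0}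

/-- A right ideal of `R` (a submodule of `R` as a right `R`-module, i.e. an
`Rᵐᵒᵖ`-submodule) is small if `I + K ≠ R` for every proper right ideal `K`. -/
def IsSmallRightIdeal (R : Type*) [Ring R] (I : Submodule Rᵐᵒᵖ R) : Prop :=
  ∀ K : Submodule Rᵐᵒᵖ R, K ≠ ⊤ → I ⊔ K ≠ ⊤

/-- A left ideal of `R` is small if `I + K ≠ R` for every proper left ideal `K`. -/
def IsSmallLeftIdeal (R : Type*) [Ring R] (I : Ideal R) : Prop :=
  ∀ K : Ideal R, K ≠ ⊤ → I ⊔ K ≠ ⊤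

/-- `R` is right small dual if `rl(I) = I` for every small right ideal `I`. -/
def IsRightSmallDual (R : Type*) [Ring R] : Prop :=
  ∀ I : Submodule Rᵐᵒᵖ R, IsSmallRightIdeal R I → rAnn R (lAnn R (I : Set R)) = (I : Set R)

/-- `R` is left small dual if `lr(I) = I` for every small left ideal `I`. -/
def IsLeftSmallDual (R : Type*) [Ring R] : Prop :=
  ∀ I : Ideal R, IsSmallLeftIdeal R I → lAnn R (rAnn R (I : Set R)) = (I : Set R)

/-- `R` is right dual if `rl(I) = I` for every right ideal `I`. -/
def IsRightDual (R : Type*) [Ring R] : Prop :=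
  ∀ I : Submodule Rᵐᵒᵖ R, rAnn R (lAnn R (I : Set R)) = (I : Set R)

/-- `R` is left dual if `lr(I) = I` for every left ideal `I`. -/
def IsLeftDual (R : Type*) [Ring R] : Prop :=
  ∀ I : Ideal R, lAnn R (rAnn R (I : Set R)) = (I : Set R)

/-- A right `R`-module is torsionless if its nonzero elements are separated by
right `R`-linear maps to `R`. -/
def IsTorsionlessRight (R : Type*) [Ring R] (M : Type*) [AddCommGroup M] [Module Rᵐᵒᵖ M] : Prop :=
  ∀ m : M, m ≠ 0 → ∃ f : M →ₗ[Rᵐᵒᵖ] R, f m ≠ 0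

/-- The left annihilator of a subset, as a left ideal. -/
def lAnnIdeal (R : Type*) [Ring R] (X : Set R) : Ideal R where
  carrier := {r : R | ∀ x ∈ X, r * x = 0}
  add_mem' := fun {a b} ha hb x hx => by rw [add_mul, ha x hx, hb x hx, add_zero]
  zero_mem' := fun x _ => zero_mul x
  smul_mem' := fun c a ha x hx => by
    simp only [smul_eq_mul, Set.mem_setOf_eq] at *
    rw [mul_assoc, ha x hx, mul_zero]

/-- A right ideal `I` has a weak supplement if there is a right ideal `K` with
`I + K = R` and `I ∩ K` small. -/
def HasWeakSupplementRight (R : Type*) [Ring R] (I : Submodule Rᵐᵒᵖ R) : Prop :=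
  ∃ K : Submodule Rᵐᵒᵖ R, I ⊔ K = ⊤ ∧ IsSmallRightIdeal R (I ⊓ K)

/-- A left ideal `I` has a weak supplement if there is a left ideal `K` with
`I + K = R` and `I ∩ K` small. -/
def HasWeakSupplementLeft (R : Type*) [Ring R] (I : Ideal R) : Prop :=
  ∃ K : Ideal R, I ⊔ K = ⊤ ∧ IsSmallLeftIdeal R (I ⊓ K)

/-- `R` is semilocal if `R/J(R)` is a semisimple ring (equivalently, a semisimple
left `R`-module). -/
def IsSemilocalRing (R : Type*) [Ring R] : Prop :=
  IsSemisimpleModule R (R ⧸ Ideal.jacobson (⊥ : Ideal R))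

/-- `R` is semiperfect if it is semilocal and idempotents lift modulo `J(R)`. -/
def IsSemiperfectRing (R : Type*) [Ring R] : Prop :=
  IsSemilocalRing R ∧
    ∀ a : R, a * a - a ∈ Ideal.jacobson (⊥ : Ideal R) →
      ∃ e : R, e * e = e ∧ e - a ∈ Ideal.jacobson (⊥ : Ideal R)

/-- `R` is `J`-regular if `R/J(R)` is von Neumann regular. -/
def IsJRegular (R : Type*) [Ring R] : Prop :=
  ∀ a : R, ∃ b : R, a * b * a - a ∈ Ideal.jacobson (⊥ : Ideal R)

/-- `R` is left perfect: `R/J(R)` is semisimple and `J(R)` is left T-nilpotent. -/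
def IsLeftPerfect (R : Type*) [Ring R] : Prop :=
  IsSemilocalRing R ∧
    ∀ a : ℕ → R, (∀ i, a i ∈ Ideal.jacobson (⊥ : Ideal R)) →
      ∃ n : ℕ, (List.ofFn fun i : Fin (n + 1) => a i).prod = 0

/-- A right ideal `E` is essential if `E ∩ T ≠ 0` for every nonzero right ideal `T`. -/
def IsEssentialRightIdeal (R : Type*) [Ring R] (E : Submodule Rᵐᵒᵖ R) : Prop :=
  ∀ T : Submodule Rᵐᵒᵖ R, T ≠ ⊥ → E ⊓ T ≠ ⊥

theorem jac_left_inv {R : Type*} [Ring R] {j : R}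
    (hj : j ∈ Ideal.jacobson (⊥ : Ideal R)) : ∃ z : R, z * (1 - j) = 1 := by
  obtain ⟨z, hz⟩ := Ideal.mem_jacobson_iff.1 hj (-1)
  refine ⟨z, ?_⟩
  rw [Ideal.mem_bot] at hz
  have : z * (1 - j) = (z * -1 * j + z - 1) + 1 := by noncomm_ring
  rw [this, hz, zero_add]

theorem jac_right_inv {R : Type*} [Ring R] {j : R}
    (hj : j ∈ Ideal.jacobson (⊥ : Ideal R)) : ∃ z : R, (1 - j) * z = 1 := by
  obtain ⟨z, hz⟩ := jac_left_inv hj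
  have hm : (-z) * j ∈ Ideal.jacobson (⊥ : Ideal R) := Ideal.mul_mem_left _ _ hj
  obtain ⟨w, hw⟩ := jac_left_inv hm
  have e : 1 - (-z) * j = z := by
    have : z = z * (1 - j) + z * j := by noncomm_ring
    rw [hz] at this
    rw [neg_mul, sub_neg_eq_add, ← this]
  rw [e] at hw
  have : w = 1 - j := left_inv_eq_right_inv hw hz
  exact ⟨z, this ▸ hw⟩

theorem jac_small {R : Type*} [Ring R] {j : R}
    (hj : j ∈ Ideal.jacobson (⊥ : Ideal R)) :
    IsSmallRightIdeal R (Submodule.span Rᵐᵒᵖ {j}) := by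
  intro K hK htop
  apply hK
  have h1 : (1 : R) ∈ Submodule.span Rᵐᵒᵖ {j} ⊔ K := htop ▸ Submodule.mem_top
  obtain ⟨y, hy, k, hk, hyk⟩ := Submodule.mem_sup.1 h1
  obtain ⟨r, rfl⟩ := Submodule.mem_span_singleton.1 hy
  have hm : j * r.unop ∈ Ideal.jacobson (⊥ : Ideal R) := Ideal.mul_mem_right _ _ hj
  obtain ⟨z, hz⟩ := jac_right_inv hm
  have hk' : k = 1 - j * r.unop := by
    rw [← hyk]; simp [MulOpposite.smul_eq_mul_unop]
  rw [← hk'] at hz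
  rw [eq_top_iff]
  intro t _
  have := K.smul_mem (MulOpposite.op (z * t)) hk
  rwa [op_smul_eq_mul, ← mul_assoc, hz, one_mul] at this

/-- If `R` is right small dual, then `J ⊆ Z_l`: every element of the
Jacobson radical has essential left annihilator. -/
theorem jacobson_subset_leftSingular (R : Type*) [Ring R] (h : IsRightSmallDual R) :
    ∀ x ∈ Ideal.jacobson (⊥ : Ideal R),
      ∀ L : Ideal R, L ≠ ⊥ → lAnnIdeal R {x} ⊓ L ≠ ⊥ := by
  intro x hx L hL hbot
  apply hL
  rw [eq_bot_iff]
  intro a ha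
  rw [Ideal.mem_bot]
  have hax : a * x ∈ Ideal.jacobson (⊥ : Ideal R) := Ideal.mul_mem_left _ _ hx
  have hd := h _ (jac_small hax)
  have hmem : a ∈ rAnn R (lAnn R (Submodule.span Rᵐᵒᵖ {a * x} : Set R)) := by
    intro r hr
    have h0 : r * (a * x) = 0 := hr _ (Submodule.mem_span_singleton_self _)
    have h1 : r * a ∈ lAnnIdeal R {x} ⊓ L := by
      refine ⟨?_, L.mul_mem_left r ha⟩
      intro y hy
      rw [Set.mem_singleton_iff.1 hy, mul_assoc, h0]
    rw [hbot] at h1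
    exact h1
  rw [hd] at hmem
  obtain ⟨y, hy⟩ := Submodule.mem_span_singleton.1 hmem
  have hm : x * y.unop ∈ Ideal.jacobson (⊥ : Ideal R) := Ideal.mul_mem_right _ _ hx
  obtain ⟨z, hz⟩ := jac_right_inv hm
  have h2 : a * (1 - x * y.unop) = 0 := by
    rw [MulOpposite.smul_eq_mul_unop] at hy
    rw [mul_sub, mul_one, ← mul_assoc, hy, sub_self]
  calc a = a * ((1 - x * y.unop) * z) := by rw [hz, mul_one]
    _ = 0 := by rw [← mul_assoc, h2, zero_mul]
end

section
/- For a ring R the following are equivalent: (1) R is J-regular, i.e., R/J(R) is von Neumann regular; (2) every principal right ideal of R has a weak supplement in R; (3) every finitely generated right ideal of R has a weak supplement in R. -/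
open Pointwise

theorem aux_unit {R : Type*} [Ring R] {x : R} (hx : x ∈ Ideal.jacobson (⊥ : Ideal R)) :
    IsUnit (1 + x) := by
  have key : ∀ x ∈ Ideal.jacobson (⊥ : Ideal R), ∃ z, z * (1 + x) = 1 := by
    intro x hx
    obtain ⟨z, hz⟩ := Ideal.mem_jacobson_iff.1 hx 1
    refine ⟨z, ?_⟩
    rw [Ideal.mem_bot, sub_eq_zero, mul_one] at hz
    rw [mul_add, mul_one, add_comm, hz]
  obtain ⟨z, hz⟩ := key x hx
  obtain ⟨w, hw⟩ := key (-(z * x)) (neg_mem (Ideal.mul_mem_left _ z hx))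
  have h1 : 1 + -(z * x) = z := by
    rw [← hz]; noncomm_ring
  rw [h1] at hw
  have h2 : w = 1 + x := by
    calc w = w * (z * (1 + x)) := by rw [hz, mul_one]
      _ = 1 + x := by rw [← mul_assoc, hw, one_mul]
  rw [h2] at hw
  exact ⟨⟨1 + x, z, hw, hz⟩, rfl⟩

theorem aux_mem {R : Type*} [Ring R] {x : R} (h : ∀ r, ∃ s, (1 + x * r) * s = 1) :
    x ∈ Ideal.jacobson (⊥ : Ideal R) := by
  rw [Ideal.mem_jacobson_iff]
  intro y
  obtain ⟨s, hs⟩ := h y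
  obtain ⟨t, ht⟩ := h (-(y * s))
  have h1 : 1 + x * -(y * s) = s := by
    rw [← hs]; noncomm_ring
  rw [h1] at ht
  have h2 : t = 1 + x * y := by
    calc t = (1 + x * y) * s * t := by rw [hs, one_mul]
      _ = 1 + x * y := by rw [mul_assoc, ht, mul_one]
  rw [h2] at ht
  refine ⟨1 - y * s * x, ?_⟩
  rw [Ideal.mem_bot]
  have h3 : (1 - y * s * x) * y * x + (1 - y * s * x) - 1 = y * (1 - s * (1 + x * y)) * x := by
    noncomm_ring
  rw [h3, ht]; simp

theorem aux_mul_mem {R : Type*} [Ring R] {I : Submodule Rᵐᵒᵖ R} {x : R} (hx : x ∈ I) (r : R) :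
    x * r ∈ I := I.smul_mem (MulOpposite.op r) hx

theorem aux_top {R : Type*} [Ring R] {I : Submodule Rᵐᵒᵖ R} {u : R} (hu : IsUnit u)
    (h : u ∈ I) : I = ⊤ := by
  obtain ⟨u, rfl⟩ := hu
  rw [eq_top_iff]
  intro x _
  have := aux_mul_mem h (↑u⁻¹ * x)
  simpa using this

theorem aux_small_iff {R : Type*} [Ring R] (I : Submodule Rᵐᵒᵖ R) :
    IsSmallRightIdeal R I ↔ ∀ x ∈ I, x ∈ Ideal.jacobson (⊥ : Ideal R) := by
  constructor
  · intro h x hx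
    apply aux_mem
    intro r
    have h0 : Submodule.span Rᵐᵒᵖ {1 + x * r} = ⊤ := by
      by_contra hne
      apply h _ hne
      apply aux_top (u := 1) isUnit_one
      have := Submodule.add_mem_sup (neg_mem (aux_mul_mem hx r))
        (Submodule.mem_span_singleton_self (R := Rᵐᵒᵖ) (1 + x * r))
      simpa using this
    have h1 : (1 : R) ∈ Submodule.span Rᵐᵒᵖ {1 + x * r} := by rw [h0]; trivial
    obtain ⟨b, hb⟩ := Submodule.mem_span_singleton.1 h1
    exact ⟨b.unop, hb⟩
  · intro h K hK hsup
    apply hK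
    have h1 : (1 : R) ∈ I ⊔ K := by rw [hsup]; trivial
    obtain ⟨y, hy, k, hk, hyk⟩ := Submodule.mem_sup.1 h1
    refine aux_top (aux_unit (neg_mem (h y hy))) ?_
    rw [← hyk]
    simpa using hk

theorem aux_exists {R : Type*} [Ring R] (h : IsJRegular R) (I : Submodule Rᵐᵒᵖ R) (hI : I.FG) :
    ∃ e ∈ I, ∀ x ∈ I, x - e * x ∈ Ideal.jacobson (⊥ : Ideal R) := by
  induction I, hI using Submodule.fg_induction with
  | singleton a =>
    obtain ⟨b, hb⟩ := h a
    refine ⟨a * b, aux_mul_mem (Submodule.mem_span_singleton_self a) b, ?_⟩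
    intro x hx
    obtain ⟨r, rfl⟩ := Submodule.mem_span_singleton.1 hx
    have := Ideal.mul_mem_right r.unop _ (neg_mem hb)
    rw [MulOpposite.smul_eq_mul_unop]
    convert this using 1
    noncomm_ring
  | sup I₁ I₂ _ _ h₁ h₂ =>
    obtain ⟨e, he, hex⟩ := h₁
    obtain ⟨f, hf, hfx⟩ := h₂
    obtain ⟨b, hb⟩ := h (f - e * f)
    have hg : f - e * f ∈ I₁ ⊔ I₂ :=
      sub_mem (Submodule.mem_sup_right hf) (Submodule.mem_sup_left (aux_mul_mem he f))
    generalize hgd : f - e * f = g at *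
    refine ⟨e + g * (b * (1 - e)), add_mem (Submodule.mem_sup_left he) (aux_mul_mem hg _), ?_⟩
    intro x hx
    obtain ⟨y, hy, z, hz, rfl⟩ := Submodule.mem_sup.1 hx
    have t1 := Ideal.mul_mem_left _ (1 - g * b) (hex y hy)
    have t2 := Ideal.mul_mem_left _ ((1 - g * b) * (1 - e)) (hfx z hz)
    have t3 := Ideal.mul_mem_right z _ (neg_mem hb)
    have := add_mem (add_mem t1 t2) t3
    convert this using 1
    have e1 : (1 - g * b) * (1 - e) * (z - f * z)
        = (1 - g * b) * (1 - e) * z - (1 - g * b) * (f - e * f) * z := by noncomm_ring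
    rw [e1, hgd]
    noncomm_ring

/-- `R` is `J`-regular iff every principal right ideal has a weak
supplement iff every finitely generated right ideal has a weak supplement. -/
theorem jRegular_tfae_weakSupplements (R : Type*) [Ring R] :
    [ IsJRegular R,
      ∀ a : R, HasWeakSupplementRight R (Submodule.span Rᵐᵒᵖ {a}),
      ∀ I : Submodule Rᵐᵒᵖ R, I.FG → HasWeakSupplementRight R I ].TFAE := by
  tfae_have 3 → 2 := fun h a => h _ (Submodule.fg_span_singleton a)
  tfae_have 2 → 1 := by
    intro h a
    obtain ⟨K, hK, hs⟩ := h a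
    have h1 : (1 : R) ∈ Submodule.span Rᵐᵒᵖ {a} ⊔ K := by rw [hK]; trivial
    obtain ⟨y, hy, k, hk, hyk⟩ := Submodule.mem_sup.1 h1
    obtain ⟨b, rfl⟩ := Submodule.mem_span_singleton.1 hy
    refine ⟨b.unop, ?_⟩
    apply (aux_small_iff _).1 hs
    have ha : a ∈ Submodule.span Rᵐᵒᵖ {a} := Submodule.mem_span_singleton_self a
    have hk' : k = 1 - a * b.unop := by
      rw [← hyk]; simp [MulOpposite.smul_eq_mul_unop]
    refine ⟨?_, ?_⟩
    · rw [mul_assoc]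
      exact sub_mem (aux_mul_mem ha _) ha
    · have := K.neg_mem (aux_mul_mem hk a)
      rw [hk'] at this
      have e1 : a * b.unop * a - a = -((1 - a * b.unop) * a) := by noncomm_ring
      rw [e1]
      exact this
  tfae_have 1 → 3 := by
    intro h I hI
    obtain ⟨e, he, hx⟩ := aux_exists h I hI
    let K : Submodule Rᵐᵒᵖ R :=
      { carrier := {x | e * x ∈ Ideal.jacobson (⊥ : Ideal R)}
        add_mem' := fun {a b} ha hb => by
          simp only [Set.mem_setOf_eq, mul_add] at *
          exact add_mem ha hb
        zero_mem' := by simp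
        smul_mem' := fun c x hx => by
          simp only [Set.mem_setOf_eq, MulOpposite.smul_eq_mul_unop, ← mul_assoc] at *
          exact Ideal.mul_mem_right _ _ hx }
    refine ⟨K, ?_, ?_⟩
    · apply aux_top (u := 1) isUnit_one
      have hk : (1 - e) ∈ K := by
        change e * (1 - e) ∈ Ideal.jacobson (⊥ : Ideal R)
        have := hx e he
        rwa [mul_sub, mul_one]
      have := Submodule.add_mem_sup he hk
      simpa using this
    · rw [aux_small_iff]
      rintro x ⟨hxI, hxK⟩
      have h2 : e * x ∈ Ideal.jacobson (⊥ : Ideal R) := hxK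
      have := add_mem (hx x hxI) h2
      simpa using this
  tfae_finish
end
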